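/- Let p be a prime and let 𝔇 be the family of branch groups on the p-ary rooted tree T which act as a p-group on each layer of T (i.e. for each n the image of the group in the symmetric group on L_n is a finite p-group). Let Γ_1 be a direct product of n_1 groups in 𝔇 and Γ_2 a direct product of n_2 groups in 𝔇. If Γ_1 and Γ_2 are abstractly commensurable, then n_1 ≡ n_2 (mod p−1). -/

import Mathlib

/-!  Common definitions: rooted trees of type `(m n)`, tree automorphisms,
rigid stabilizers, branch groups, and auxiliary notions. -/

universe u

/-- Vertices of the rooted tree of type `m`: finite sequences `(x_0, …, x_{n-1})`
with `x_i ∈ {1, …, m i}` (encoded as `Fin (m i)`). -/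
def Vertex (m : ℕ → ℕ) : Type := Σ n : ℕ, ∀ i : Fin n, Fin (m i)

namespace Vertex

variable {m : ℕ → ℕ}

/-- The level of a vertex: its length. -/
def level (v : Vertex m) : ℕ := v.1

/-- `v` is a (weak) prefix of `w`; i.e. `w` lies in the subtree `T_v`
(`w = v` or `w` is a descendant of `v`). -/
def IsPrefix (v w : Vertex m) : Prop :=
  ∃ h : v.1 ≤ w.1, ∀ i : Fin v.1, w.2 (Fin.castLE h i) = v.2 i

/-- `w` is a child (one-step extension) of `v`. -/
def IsChild (v w : Vertex m) : Prop := w.1 = v.1 + 1 ∧ IsPrefix v w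

end Vertex

/-- The `n`-th layer `L_n` of the tree: all vertices of level `n`. -/
def layer (m : ℕ → ℕ) (n : ℕ) : Set (Vertex m) := {v | v.1 = n}

section Rist

variable {m : ℕ → ℕ} (G : Type*) [Group G] [MulAction G (Vertex m)]

/-- The rigid stabilizer of a vertex `v`: all elements fixing every vertex
outside the subtree `T_v`. -/
def rist (v : Vertex m) : Subgroup G :=
  ⨅ w ∈ {w : Vertex m | ¬ Vertex.IsPrefix v w}, MulAction.stabilizer G w

/-- The subgroup generated by the rigid stabilizers of the vertices in `X`. -/
def ristSet (X : Set (Vertex m)) : Subgroup G := ⨆ v ∈ X, rist G v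

/-- `rist_G(n)`, the rigid stabilizer of the `n`-th layer. -/
def ristLayer (m : ℕ → ℕ) (G : Type*) [Group G] [MulAction G (Vertex m)] (n : ℕ) :
    Subgroup G :=
  ristSet G (layer m n)

/-- The orbit of the vertex `v` under a subgroup `H ≤ G`. -/
def subOrbit (H : Subgroup G) (v : Vertex m) : Set (Vertex m) :=
  {w | ∃ h ∈ H, h • v = w}

/-- The set of orbits of a subgroup `H ≤ G` on a set `X` of vertices. -/
def orbitsOn (H : Subgroup G) (X : Set (Vertex m)) : Set (Set (Vertex m)) :=
  (fun v => subOrbit G H v) '' X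

end Rist

/-- `G` is a branch group on the rooted tree of type `m` (with respect to the given
action): the action is faithful and by tree automorphisms, `G` acts transitively on
each layer, and each `rist_G(n)` has finite index in `G`. -/
structure IsBranchGroup (m : ℕ → ℕ) (G : Type*) [Group G] [MulAction G (Vertex m)] :
    Prop where
  faithful : ∀ g : G, (∀ v : Vertex m, g • v = v) → g = 1
  aut : ∀ (g : G) (v w : Vertex m), Vertex.IsChild v w ↔ Vertex.IsChild (g • v) (g • w)
  trans : ∀ v w : Vertex m, v.1 = w.1 → ∃ g : G, g • v = w
  ristFiniteIndex : ∀ n : ℕ, (ristLayer m G n).FiniteIndex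

/-- A group is virtually soluble if it has a soluble subgroup of finite index. -/
def VirtuallySolvable (Γ : Type*) [Group Γ] : Prop :=
  ∃ S : Subgroup Γ, S.FiniteIndex ∧ IsSolvable ↥S

/-- A group is virtually abelian if it has an abelian subgroup of finite index. -/
def VirtuallyAbelian (Γ : Type*) [Group Γ] : Prop :=
  ∃ S : Subgroup Γ, S.FiniteIndex ∧ ∀ a ∈ S, ∀ b ∈ S, a * b = b * a

/-- For subgroups `A ≤ B` of a group with `A` normalised by `B`, this says that the
factor `B/A` belongs to the class `𝔛`. -/
def FactorIn (𝔛 : (Γ : Type u) → [inst : Group Γ] → Prop) {G : Type u} [Group G]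
    (A B : Subgroup G) : Prop :=
  ∃ hn : (A.subgroupOf B).Normal, letI := hn; 𝔛 (↥B ⧸ A.subgroupOf B)

/-- The factor `B/A` is virtually soluble. -/
def FactorVirtuallySolvable {G : Type*} [Group G] (A B : Subgroup G) : Prop :=
  ∃ hn : (A.subgroupOf B).Normal,
    letI := hn; VirtuallySolvable (↥B ⧸ A.subgroupOf B)

/-- The factor `B/A` is virtually abelian. -/
def FactorVirtuallyAbelian {G : Type*} [Group G] (A B : Subgroup G) : Prop :=
  ∃ hn : (A.subgroupOf B).Normal,
    letI := hn; VirtuallyAbelian (↥B ⧸ A.subgroupOf B)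

/-- `Γ` has `r` infinite normal subgroups that generate their direct product in `Γ`:
each of them intersects trivially the subgroup generated by the others. -/
def HasIndepFamily (Γ : Type*) [Group Γ] (r : ℕ) : Prop :=
  ∃ N : Fin r → Subgroup Γ, (∀ i, (N i).Normal) ∧ (∀ i, Infinite ↥(N i)) ∧
    ∀ i, N i ⊓ (⨆ j ∈ ({i}ᶜ : Set (Fin r)), N j) = ⊥

/-!
Let `A` be a finite-index subgroup of a direct product of branch groups. It acts on the forest
formed by the trees of the factors. The rigid stabilizers in `A` of the distinct `A`-orbits on a
layer of the forest are pairwise disjoint nontrivial normal subgroups. Conversely, a normal subgroup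
that moves a vertex `v` contains the nontrivial group `⁅R, R⁆`, where `R` is the rigid stabilizer of
`v`, so disjoint normal subgroups move vertices in distinct orbits. Hence the greatest number of
orbits of `A` on a layer, which exists because `A` has finite index, is the greatest cardinality of
a family of pairwise disjoint nontrivial normal subgroups of `A`, an isomorphism invariant. As `A`
acts as a `p`-group, its orbits on a layer have cardinality a power of `p`, which is `1` modulo
`p - 1`. So modulo `p - 1` the number of orbits of `A` on a layer is the cardinality of the layer,
and so is the number of orbits of the full product, which has one orbit for each factor.
-/

open scoped Pointwise commutatorElement

section GroupTheory

variable {G : Type*} [Group G]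

theorem commutatorElement_commutatorElement_of_commute {x a b : G}
    (ha : Commute (x * a⁻¹ * x⁻¹) a) (hb : Commute (x * a⁻¹ * x⁻¹) b) :
    ⁅⁅x, a⁻¹⁆, b⁆ = ⁅a, b⁆ := by
  have hx : ⁅x, a⁻¹⁆ = x * a⁻¹ * x⁻¹ * a := by simp [commutatorElement_def]
  rw [hx]
  generalize x * a⁻¹ * x⁻¹ = c at ha hb
  have hc : Commute c (a * b * a⁻¹) := (ha.mul_right hb).mul_right ha.inv_right
  calc ⁅c * a, b⁆ = c * (a * b * a⁻¹) * c⁻¹ * b⁻¹ := by rw [commutatorElement_def]; group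
    _ = ⁅a, b⁆ := by rw [hc.eq, mul_inv_cancel_right, commutatorElement_def]

theorem finite_of_disjoint_finiteIndex {K R : Subgroup G} [K.FiniteIndex] (h : Disjoint K R) :
    Finite R := by
  refine Nat.finite_of_card_ne_zero ?_
  rw [← Subgroup.relIndex_bot_left, ← h.eq_bot, Subgroup.inf_relIndex_right]
  exact (Subgroup.instFiniteIndex_subgroupOf K R).index_ne_zero

theorem finite_iSup_of_pairwise_commute {ι : Type*} [Finite ι] {R : ι → Subgroup G}
    (hfin : ∀ i, Finite (R i))
    (hcomm : Pairwise fun i j => ∀ x y : G, x ∈ R i → y ∈ R j → Commute x y) :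
    Finite ↥(⨆ i, R i) := by
  cases nonempty_fintype ι
  rw [← Subgroup.noncommPiCoprod_range (hcomm := hcomm)]
  exact Finite.of_surjective _ (MonoidHom.rangeRestrict_surjective _)

end GroupTheory

section Orbits

variable {p : ℕ} {G X : Type*} [Group G] [MulAction G X] {Y Z : Set X}

/-- Every element of `G` acts on the set `Y` with order a power of `p`. For an invariant set `Y`,
this says that the image of `G` in the symmetric group on `Y` is a `p`-group. -/
def ActsAsPGroupOn (p : ℕ) (G : Type*) [Group G] [MulAction G X] (Y : Set X) : Prop :=
  ∀ g : G, ∃ e : ℕ, ∀ y ∈ Y, (g ^ p ^ e) • y = y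

/-- The set of those orbits of `G` that meet `Y`, used to count orbits on invariant subsets of a
fixed `G`-set for several groups at once. -/
def orbitsMeeting (G : Type*) [Group G] [MulAction G X] (Y : Set X) : Set (Set X) :=
  MulAction.orbit G '' Y

theorem ActsAsPGroupOn.mono (h : ActsAsPGroupOn p G Z) (hYZ : Y ⊆ Z) : ActsAsPGroupOn p G Y :=
  fun g => (h g).imp fun _ he y hy => he y (hYZ hy)

theorem ActsAsPGroupOn.subgroup (h : ActsAsPGroupOn p G Y) (A : Subgroup G) :
    ActsAsPGroupOn p A Y :=
  fun a => h a

theorem ActsAsPGroupOn.exists_ncard_orbit_eq_pow [Fact p.Prime] {x : X}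
    (h : ActsAsPGroupOn p G (MulAction.orbit G x)) (hfin : (MulAction.orbit G x).Finite) :
    ∃ k, (MulAction.orbit G x).ncard = p ^ k := by
  have := hfin.to_subtype
  let K : Subgroup G := (MulAction.toPermHom G (MulAction.orbit G x)).ker
  have hK : K ≤ MulAction.stabilizer G x := fun g hg =>
    congrArg Subtype.val (Equiv.congr_fun (MonoidHom.mem_ker.1 hg) ⟨x, MulAction.mem_orbit_self x⟩)
  have hquot : IsPGroup p (G ⧸ K) := by
    rw [isPGroup_iff_pow_pow_eq_one, (QuotientGroup.mk'_surjective K).forall]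
    intro g
    obtain ⟨e, he⟩ := h g
    refine ⟨e, (QuotientGroup.eq_one_iff (g ^ p ^ e)).2 ?_⟩
    exact MonoidHom.mem_ker.2 (Equiv.ext fun y => Subtype.ext (he y y.2))
  obtain ⟨n, hn⟩ := IsPGroup.iff_card.1 hquot
  have hdvd : (MulAction.stabilizer G x).index ∣ p ^ n := by
    rw [← hn]
    exact Subgroup.index_dvd_of_le hK
  obtain ⟨k, -, hk⟩ := (Nat.dvd_prime_pow Fact.out).1 hdvd
  exact ⟨k, (MulAction.index_stabilizer G x).symm.trans hk⟩

theorem pow_modEq_one_sub_one (hp : 1 ≤ p) (k : ℕ) : p ^ k ≡ 1 [MOD p - 1] := by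
  simpa using (Nat.modEq_sub hp).pow k

theorem ActsAsPGroupOn.ncard_orbitsMeeting_modEq [hp : Fact p.Prime] (h : ActsAsPGroupOn p G Y)
    (hfin : Y.Finite) (hinv : ∀ y ∈ Y, MulAction.orbit G y ⊆ Y) :
    (orbitsMeeting G Y).ncard ≡ Y.ncard [MOD p - 1] := by
  classical
  lift Y to Finset X using hfin
  have hfiber : ∀ O ∈ Y.image (MulAction.orbit G),
      1 ≡ {y ∈ Y | MulAction.orbit G y = O}.card [MOD p - 1] := by
    intro O hO
    obtain ⟨x, hx, rfl⟩ := Finset.mem_image.1 hO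
    have hfiber_eq : {y | y ∈ Y ∧ MulAction.orbit G y = MulAction.orbit G x} =
        MulAction.orbit G x := by
      ext y
      exact ⟨fun hy => MulAction.orbit_eq_iff.1 hy.2,
        fun hy => ⟨hinv x hx hy, MulAction.orbit_eq_iff.2 hy⟩⟩
    obtain ⟨k, hk⟩ := (h.mono (hinv x hx)).exists_ncard_orbit_eq_pow
      (Y.finite_toSet.subset (hinv x hx))
    rw [← Set.ncard_coe_finset, Finset.coe_filter, hfiber_eq, hk]
    exact (pow_modEq_one_sub_one hp.out.one_le k).symm
  rw [orbitsMeeting, ← Finset.coe_image, Set.ncard_coe_finset, Set.ncard_coe_finset,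
    Finset.card_eq_sum_card_image (MulAction.orbit G) Y, Finset.card_eq_sum_ones]
  exact Nat.ModEq.sum hfiber

theorem ncard_orbitsMeeting_subgroup_le (A : Subgroup G) [A.FiniteIndex]
    (hfin : (orbitsMeeting G Y).Finite) :
    (orbitsMeeting A Y).ncard ≤ A.index * (orbitsMeeting G Y).ncard := by
  choose rep _ hrep using fun O : orbitsMeeting G Y => O.2
  have := hfin.to_subtype
  let cosetOrbit : (G ⧸ A) × orbitsMeeting G Y → Set X := fun c =>
    MulAction.orbit A (c.1.out⁻¹ • rep c.2)
  have hsub : orbitsMeeting A Y ⊆ Set.range cosetOrbit := by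
    rintro _ ⟨y, hy, rfl⟩
    let O : orbitsMeeting G Y := ⟨MulAction.orbit G y, y, hy, rfl⟩
    obtain ⟨g, hg⟩ := MulAction.orbit_eq_iff.1 (hrep O).symm
    obtain ⟨a, ha⟩ := QuotientGroup.mk_out_eq_mul A g⁻¹
    refine ⟨(((g⁻¹ : G) : G ⧸ A), O), MulAction.orbit_eq_iff.2 ⟨a⁻¹, ?_⟩⟩
    change a⁻¹ • y = ((g⁻¹ : G) : G ⧸ A).out⁻¹ • rep O
    rw [ha, ← hg]
    simp [mul_smul, Subgroup.smul_def]
  calc (orbitsMeeting A Y).ncard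
      ≤ (Set.range cosetOrbit).ncard := Set.ncard_le_ncard hsub
    _ ≤ Nat.card ((G ⧸ A) × orbitsMeeting G Y) := Finite.card_range_le cosetOrbit
    _ = A.index * (orbitsMeeting G Y).ncard := Nat.card_prod _ _

end Orbits

section RigidStabilizer

variable {H Ω : Type*} [Group H] [MulAction H Ω] {S T : Set Ω}

theorem commute_of_mem_fixingSubgroup_compl [FaithfulSMul H Ω] (hST : Disjoint S T) {a b : H}
    (ha : a ∈ fixingSubgroup H Sᶜ) (hb : b ∈ fixingSubgroup H Tᶜ) : Commute a b := by
  rw [mem_fixingSubgroup_iff] at ha hb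
  have hperm : (MulAction.toPermHom H Ω a).Disjoint (MulAction.toPermHom H Ω b) := fun x =>
    (em (x ∈ S)).elim (fun hx => Or.inr (hb x (hST.notMem_of_mem_left hx)))
      fun hx => Or.inl (ha x hx)
  exact hperm.commute.of_map (f := MulAction.toPermHom H Ω) MulAction.toPerm_injective

theorem disjoint_fixingSubgroup_compl [FaithfulSMul H Ω] (hST : Disjoint S T) :
    Disjoint (fixingSubgroup H Sᶜ) (fixingSubgroup H Tᶜ) := by
  rw [Subgroup.disjoint_def]
  intro a ha hb
  rw [mem_fixingSubgroup_iff] at ha hb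
  refine FaithfulSMul.eq_of_smul_eq_smul (α := Ω) fun x => ?_
  rw [one_smul]
  exact (em (x ∈ S)).elim (fun hx => hb x (hST.notMem_of_mem_left hx)) (ha x)

variable [Preorder Ω]

/-- The rigid stabilizer of a set `S` of vertices: the elements of `H` that fix everything outside
the union of the subtrees hanging from `S`. -/
def rigidStabilizer (H : Type*) [Group H] [MulAction H Ω] (S : Set Ω) : Subgroup H :=
  fixingSubgroup H (upperClosure S : Set Ω)ᶜ

theorem mem_rigidStabilizer {a : H} :
    a ∈ rigidStabilizer H S ↔ ∀ x, (∀ v ∈ S, ¬ v ≤ x) → a • x = x := by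
  simp [rigidStabilizer, mem_fixingSubgroup_iff]

theorem rigidStabilizer_le_of_subset_upperClosure (hST : S ⊆ upperClosure T) :
    rigidStabilizer H S ≤ rigidStabilizer H T :=
  fixingSubgroup_antitone H Ω <| Set.compl_subset_compl.2 <|
    upperClosure_min hST (upperClosure T).upper

end RigidStabilizer

/-- An action of a group on a forest by level-preserving automorphisms. The vertices of the forest
are the elements of `Ω`, with `u ≤ x` meaning that `x` lies in the subtree hanging from `u`; every
branch is infinite, and a vertex has one ancestor on each smaller level. -/
structure IsForestAction (H : Type*) {Ω : Type*} [Group H] [Preorder Ω] [MulAction H Ω]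
    (level : Ω → ℕ) : Prop where
  level_smul : ∀ (g : H) (x : Ω), level (g • x) = level x
  smul_le_smul : ∀ (g : H) {u x : Ω}, u ≤ x → g • u ≤ g • x
  eq_of_level_eq_of_le : ∀ {u w x : Ω}, level u = level w → u ≤ x → w ≤ x → u = w
  exists_ge_level_eq : ∀ {u : Ω} {n : ℕ}, level u ≤ n → ∃ x, u ≤ x ∧ level x = n

namespace IsForestAction

variable {H Ω : Type*} [Group H] [Preorder Ω] [MulAction H Ω] {level : Ω → ℕ} {n : ℕ}

theorem subgroup (F : IsForestAction H level) (A : Subgroup H) : IsForestAction A level where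
  level_smul a := F.level_smul a
  smul_le_smul a := F.smul_le_smul a
  eq_of_level_eq_of_le := F.eq_of_level_eq_of_le
  exists_ge_level_eq := F.exists_ge_level_eq

theorem smul_eq_of_le (F : IsForestAction H level) {g : H} {u x : Ω} (hux : u ≤ x)
    (hx : g • x = x) : g • u = u :=
  F.eq_of_level_eq_of_le (F.level_smul g u) (hx ▸ F.smul_le_smul g hux) hux

theorem orbit_subset_layer (F : IsForestAction H level) {v : Ω} (hv : level v = n) :
    MulAction.orbit H v ⊆ level ⁻¹' {n} := by
  rintro _ ⟨g, rfl⟩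
  exact (F.level_smul g v).trans hv

theorem coe_upperClosure_smul (F : IsForestAction H level) (g : H) (S : Set Ω) :
    (upperClosure (g • S) : Set Ω) = g • (upperClosure S : Set Ω) := by
  ext x
  simp only [Set.mem_smul_set_iff_inv_smul_mem, SetLike.mem_coe, mem_upperClosure]
  constructor
  · rintro ⟨u, hu, hux⟩
    exact ⟨g⁻¹ • u, hu, F.smul_le_smul g⁻¹ hux⟩
  · rintro ⟨u, hu, hux⟩
    exact ⟨g • u, by rwa [inv_smul_smul], by simpa using F.smul_le_smul g hux⟩

theorem rigidStabilizer_smul (F : IsForestAction H level) (g : H) (S : Set Ω) :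
    rigidStabilizer H (g • S) = (rigidStabilizer H S).map (MulAut.conj g).toMonoidHom := by
  rw [rigidStabilizer, F.coe_upperClosure_smul, ← Set.smul_set_compl]
  exact SubMulAction.fixingSubgroup_smul_eq_fixingSubgroup_map_conj _ g

theorem conj_mem_rigidStabilizer_smul (F : IsForestAction H level) {a : H} {S : Set Ω}
    (ha : a ∈ rigidStabilizer H S) (g : H) : g * a * g⁻¹ ∈ rigidStabilizer H (g • S) := by
  rw [F.rigidStabilizer_smul]
  exact Subgroup.mem_map_of_mem _ ha

theorem normal_rigidStabilizer_orbit (F : IsForestAction H level) (v : Ω) :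
    (rigidStabilizer H (MulAction.orbit H v)).Normal where
  conj_mem a ha g := by simpa only [MulAction.smul_orbit] using F.conj_mem_rigidStabilizer_smul ha g

theorem disjoint_upperClosure (F : IsForestAction H level) {S T : Set Ω}
    (hS : S ⊆ level ⁻¹' {n}) (hT : T ⊆ level ⁻¹' {n}) (hST : Disjoint S T) :
    Disjoint (upperClosure S : Set Ω) (upperClosure T : Set Ω) := by
  rw [Set.disjoint_left]
  rintro x ⟨u, hu, hux⟩ ⟨w, hw, hwx⟩
  obtain rfl : u = w := F.eq_of_level_eq_of_le ((hS hu).trans (hT hw).symm) hux hwx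
  exact hST.notMem_of_mem_left hu hw

theorem disjoint_upperClosure_smul_singleton (F : IsForestAction H level) {g : H} {v : Ω}
    (hv : g • v ≠ v) :
    Disjoint (upperClosure (g • {v}) : Set Ω) (upperClosure {v} : Set Ω) :=
  F.disjoint_upperClosure (n := level v) (by simp [F.level_smul]) (by simp) (by simpa using hv)

variable [FaithfulSMul H Ω]

theorem commutator_rigidStabilizer_le (F : IsForestAction H level) {N : Subgroup H} [N.Normal]
    {x : H} (hx : x ∈ N) {v : Ω} (hv : x • v ≠ v) :
    ⁅rigidStabilizer H {v}, rigidStabilizer H {v}⁆ ≤ N := by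
  rw [Subgroup.commutator_le]
  intro a ha b hb
  have hconj : x * a⁻¹ * x⁻¹ ∈ rigidStabilizer H (x • {v}) :=
    F.conj_mem_rigidStabilizer_smul (inv_mem ha) x
  have hdisj := F.disjoint_upperClosure_smul_singleton hv
  rw [← commutatorElement_commutatorElement_of_commute
    (commute_of_mem_fixingSubgroup_compl hdisj hconj ha)
    (commute_of_mem_fixingSubgroup_compl hdisj hconj hb)]
  have hcomm_mem : ∀ y ∈ N, ∀ c, ⁅y, c⁆ ∈ N := fun y hy c =>
    Subgroup.commutator_le_left N ⊤ (Subgroup.commutator_mem_commutator hy (Subgroup.mem_top c))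
  exact hcomm_mem _ (hcomm_mem x hx a⁻¹) b

theorem commutator_rigidStabilizer_ne_bot (F : IsForestAction H level)
    (hR : ∀ v, rigidStabilizer H ({v} : Set Ω) ≠ ⊥) (v : Ω) :
    ⁅rigidStabilizer H {v}, rigidStabilizer H {v}⁆ ≠ ⊥ := by
  obtain ⟨a, ha, ha_ne⟩ := (Subgroup.bot_or_exists_ne_one _).resolve_left (hR v)
  obtain ⟨w, hw⟩ : ∃ w : Ω, a • w ≠ w := by
    by_contra! hfix
    exact ha_ne (FaithfulSMul.eq_of_smul_eq_smul fun w => by rw [hfix w, one_smul])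
  have hvw : v ≤ w := by
    by_contra hvw
    exact hw (mem_rigidStabilizer.1 ha w (by simpa using hvw))
  obtain ⟨b, hb, hb_ne⟩ := (Subgroup.bot_or_exists_ne_one _).resolve_left (hR w)
  have hbv : b ∈ rigidStabilizer H {v} :=
    rigidStabilizer_le_of_subset_upperClosure (by simpa using hvw) hb
  intro hbot
  have hcomm : a * b = b * a := commutatorElement_eq_one_iff_mul_comm.1 <|
    (Subgroup.eq_bot_iff_forall _).1 hbot _ (Subgroup.commutator_mem_commutator ha hbv)
  have hconj : b ∈ rigidStabilizer H (a • {w}) := by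
    simpa [hcomm] using F.conj_mem_rigidStabilizer_smul hb a
  exact hb_ne <| Subgroup.disjoint_def.1
    (disjoint_fixingSubgroup_compl (F.disjoint_upperClosure_smul_singleton hw)) hconj hb

theorem orbit_ne_of_disjoint (F : IsForestAction H level)
    (hR : ∀ v, rigidStabilizer H ({v} : Set Ω) ≠ ⊥) {M N : Subgroup H} [M.Normal] [N.Normal]
    (hMN : Disjoint M N) {g h : H} (hg : g ∈ M) (hh : h ∈ N) {v w : Ω} (hv : g • v ≠ v)
    (hw : h • w ≠ w) : MulAction.orbit H v ≠ MulAction.orbit H w := by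
  intro horbit
  obtain ⟨c, rfl⟩ := MulAction.orbit_eq_iff.1 horbit
  have hmoves : (c * h * c⁻¹) • c • w ≠ c • w := by simpa [mul_smul] using hw
  have hle := le_inf (F.commutator_rigidStabilizer_le hg hv)
    (F.commutator_rigidStabilizer_le (‹N.Normal›.conj_mem h hh c) hmoves)
  exact F.commutator_rigidStabilizer_ne_bot hR _ (le_bot_iff.1 (hle.trans hMN.le_bot))

end IsForestAction

section DisjointNormalFamily

/-- A family of pairwise disjoint nontrivial normal subgroups. -/
structure IsDisjointNormalFamily {ι H : Type*} [Group H] (N : ι → Subgroup H) : Prop where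
  normal : ∀ i, (N i).Normal
  ne_bot : ∀ i, N i ≠ ⊥
  disjoint : Pairwise fun i j => Disjoint (N i) (N j)

/-- The cardinalities of the finite families of pairwise disjoint nontrivial normal subgroups of
`H`; the greatest one, if any, is an isomorphism invariant of `H`. -/
def disjointNormalFamilyCards (H : Type*) [Group H] : Set ℕ :=
  {r | ∃ N : Fin r → Subgroup H, IsDisjointNormalFamily N}

variable {ι H K : Type*} [Group H] [Group K] {N : ι → Subgroup H}

theorem IsDisjointNormalFamily.map (hN : IsDisjointNormalFamily N) (e : H ≃* K) :
    IsDisjointNormalFamily fun i => (N i).map e.toMonoidHom where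
  normal i := (hN.normal i).map _ e.surjective
  ne_bot i h := hN.ne_bot i ((Subgroup.map_eq_bot_iff_of_injective _ e.injective).1 h)
  disjoint _ _ hij := Subgroup.disjoint_map e.injective (hN.disjoint hij)

theorem IsDisjointNormalFamily.card_mem [Finite ι] (hN : IsDisjointNormalFamily N) :
    Nat.card ι ∈ disjointNormalFamilyCards H :=
  let e := (Finite.equivFin ι).symm
  ⟨N ∘ e, fun i => hN.normal (e i), fun i => hN.ne_bot (e i),
    hN.disjoint.comp_of_injective e.injective⟩

theorem disjointNormalFamilyCards_congr (e : H ≃* K) :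
    disjointNormalFamilyCards H = disjointNormalFamilyCards K :=
  Set.Subset.antisymm (fun _ ⟨_, hN⟩ => ⟨_, hN.map e⟩) fun _ ⟨_, hN⟩ => ⟨_, hN.map e.symm⟩

end DisjointNormalFamily

namespace IsForestAction

variable {H Ω : Type*} [Group H] [Preorder Ω] [MulAction H Ω] [FaithfulSMul H Ω]
  {level : Ω → ℕ}

theorem isDisjointNormalFamily_rigidStabilizer (F : IsForestAction H level)
    (hR : ∀ v, rigidStabilizer H ({v} : Set Ω) ≠ ⊥) (n : ℕ) :
    IsDisjointNormalFamily fun O : orbitsMeeting H (level ⁻¹' {n}) => rigidStabilizer H O.1 where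
  normal := by
    rintro ⟨_, v, -, rfl⟩
    exact F.normal_rigidStabilizer_orbit v
  ne_bot := by
    rintro ⟨_, v, -, rfl⟩
    refine ne_bot_of_le_ne_bot (hR v) (rigidStabilizer_le_of_subset_upperClosure ?_)
    exact Set.singleton_subset_iff.2 (subset_upperClosure (MulAction.mem_orbit_self v))
  disjoint := by
    rintro ⟨_, v, hv, rfl⟩ ⟨_, w, hw, rfl⟩ hvw
    refine disjoint_fixingSubgroup_compl <|
      F.disjoint_upperClosure (F.orbit_subset_layer hv) (F.orbit_subset_layer hw) ?_
    exact (MulAction.orbit.eq_or_disjoint v w).resolve_left fun h => hvw (Subtype.ext h)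

theorem exists_layer_forall_smul_ne (F : IsForestAction H level) {κ : Type*} [Finite κ]
    {N : κ → Subgroup H} (hN : ∀ i, N i ≠ ⊥) :
    ∃ n, ∀ i, ∃ g ∈ N i, ∃ x, level x = n ∧ g • x ≠ x := by
  have hmoves : ∀ i, ∃ g ∈ N i, ∃ x : Ω, g • x ≠ x := by
    intro i
    obtain ⟨g, hg, hg_ne⟩ := (Subgroup.bot_or_exists_ne_one _).resolve_left (hN i)
    refine ⟨g, hg, ?_⟩
    by_contra! hfix
    exact hg_ne (FaithfulSMul.eq_of_smul_eq_smul fun x => by rw [hfix x, one_smul])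
  choose g hg x hx using hmoves
  obtain ⟨n, hn⟩ := Finite.bddAbove_range fun i => level (x i)
  refine ⟨n, fun i => ?_⟩
  obtain ⟨y, hxy, hy⟩ := F.exists_ge_level_eq (hn ⟨i, rfl⟩)
  exact ⟨g i, hg i, y, hy, fun h => hx i (F.smul_eq_of_le hxy h)⟩

theorem exists_card_le_ncard_orbitsMeeting (F : IsForestAction H level)
    (hfin : ∀ n, (orbitsMeeting H (level ⁻¹' {n})).Finite)
    (hR : ∀ v, rigidStabilizer H ({v} : Set Ω) ≠ ⊥) {κ : Type*} [Finite κ] {N : κ → Subgroup H}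
    (hN : IsDisjointNormalFamily N) :
    ∃ n, Nat.card κ ≤ (orbitsMeeting H (level ⁻¹' {n})).ncard := by
  obtain ⟨n, hn⟩ := F.exists_layer_forall_smul_ne hN.ne_bot
  choose g hg x hxn hgx using hn
  have := (hfin n).to_subtype
  let orbitOf : κ → orbitsMeeting H (level ⁻¹' {n}) := fun i => ⟨_, x i, hxn i, rfl⟩
  refine ⟨n, Nat.card_le_card_of_injective orbitOf fun i j hij => ?_⟩
  by_contra hne
  have := hN.normal i
  have := hN.normal j
  exact F.orbit_ne_of_disjoint hR (hN.disjoint hne) (hg i) (hg j) (hgx i) (hgx j)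
    (congrArg Subtype.val hij)

theorem exists_isGreatest_ncard_orbitsMeeting (F : IsForestAction H level)
    (hfin : ∀ n, (orbitsMeeting H (level ⁻¹' {n})).Finite)
    (hbdd : BddAbove (Set.range fun n => (orbitsMeeting H (level ⁻¹' {n})).ncard))
    (hR : ∀ v, rigidStabilizer H ({v} : Set Ω) ≠ ⊥) :
    ∃ n, IsGreatest (disjointNormalFamilyCards H) (orbitsMeeting H (level ⁻¹' {n})).ncard := by
  obtain ⟨n, hn⟩ := Nat.sSup_mem (Set.range_nonempty _) hbdd
  refine ⟨n, ?_, ?_⟩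
  · have := (hfin n).to_subtype
    exact (F.isDisjointNormalFamily_rigidStabilizer hR n).card_mem
  · rintro r ⟨N, hN⟩
    obtain ⟨k, hk⟩ := F.exists_card_le_ncard_orbitsMeeting hfin hR hN
    rw [Nat.card_fin] at hk
    exact hk.trans ((le_csSup hbdd ⟨k, rfl⟩).trans_eq hn.symm)

end IsForestAction

section Sigma

variable {ι : Type*} {G X : ι → Type*} [∀ j, Group (G j)] [∀ j, MulAction (G j) (X j)]

/-- The direct product of the groups `G j` acts on the disjoint union of the `G j`-sets `X j`; for
trees `X j` this turns the product into a group acting on a forest. -/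
instance piSigmaMulAction : MulAction (∀ j, G j) (Σ j, X j) where
  smul g x := ⟨x.1, g x.1 • x.2⟩
  one_smul x := Sigma.ext rfl (heq_of_eq (one_smul (G x.1) x.2))
  mul_smul g h x := Sigma.ext rfl (heq_of_eq (mul_smul (g x.1) (h x.1) x.2))

theorem pi_smul_sigma_mk (g : ∀ j, G j) (j : ι) (v : X j) :
    g • (⟨j, v⟩ : Σ j, X j) = ⟨j, g j • v⟩ :=
  rfl

instance piSigmaFaithfulSMul [∀ j, FaithfulSMul (G j) (X j)] :
    FaithfulSMul (∀ j, G j) (Σ j, X j) where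
  eq_of_smul_eq_smul h := funext fun j => FaithfulSMul.eq_of_smul_eq_smul fun v =>
    sigma_mk_injective (h ⟨j, v⟩)

theorem ActsAsPGroupOn.sigma [Finite ι] {p : ℕ} {Y : ∀ j, Set (X j)}
    (h : ∀ j, ActsAsPGroupOn p (G j) (Y j)) :
    ActsAsPGroupOn p (∀ j, G j) {x : Σ j, X j | x.2 ∈ Y x.1} := by
  intro g
  choose e he using fun j => h j (g j)
  obtain ⟨E, hE⟩ := Finite.bddAbove_range e
  refine ⟨E, fun ⟨j, v⟩ hv => ?_⟩
  obtain ⟨d, hd⟩ := Nat.exists_eq_add_of_le (hE ⟨j, rfl⟩ : e j ≤ E)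
  have hpow : (g j ^ p ^ E) • v = v := by
    rw [hd, pow_add, pow_mul]
    exact pow_mem (show g j ^ p ^ e j ∈ MulAction.stabilizer (G j) v from he j v hv) _
  rw [pi_smul_sigma_mk, Pi.pow_apply, hpow]

variable [∀ j, Preorder (X j)]

theorem IsForestAction.sigma {level : ∀ j, X j → ℕ}
    (F : ∀ j, IsForestAction (G j) (level j)) :
    IsForestAction (∀ j, G j) fun x : Σ j, X j => level x.1 x.2 where
  level_smul g x := (F x.1).level_smul (g x.1) x.2
  smul_le_smul := by
    rintro g _ _ ⟨j, u, x, hux⟩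
    exact .fiber j _ _ ((F j).smul_le_smul (g j) hux)
  eq_of_level_eq_of_le := by
    rintro _ _ _ hlevel ⟨j, u, x, hux⟩ ⟨_, w, _, hwx⟩
    exact congrArg (Sigma.mk j) ((F j).eq_of_level_eq_of_le hlevel hux hwx)
  exists_ge_level_eq := by
    rintro ⟨j, u⟩ n hn
    obtain ⟨x, hux, hx⟩ := (F j).exists_ge_level_eq hn
    exact ⟨⟨j, x⟩, Sigma.mk_le_mk_iff.2 hux, hx⟩

theorem mulSingle_mem_rigidStabilizer [DecidableEq ι] {j : ι} {u : X j} {a : G j}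
    (ha : a ∈ rigidStabilizer (G j) {u}) :
    Pi.mulSingle j a ∈ rigidStabilizer (∀ j, G j) ({⟨j, u⟩} : Set (Σ j, X j)) := by
  rw [mem_rigidStabilizer] at ha ⊢
  rintro ⟨i, w⟩ hw
  rw [pi_smul_sigma_mk]
  obtain rfl | hij := eq_or_ne i j
  · simpa using ha w (by simpa using hw)
  · rw [Pi.mulSingle_eq_of_ne hij, one_smul]

end Sigma

namespace Vertex

variable {m : ℕ → ℕ} {n : ℕ} {u v w : Vertex m}

instance : PartialOrder (Vertex m) where
  le := IsPrefix
  le_refl _ := ⟨le_rfl, fun _ => rfl⟩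
  le_trans _ _ _ := fun ⟨huv, h⟩ ⟨hvw, h'⟩ =>
    ⟨huv.trans hvw, fun i => (h' (Fin.castLE huv i)).trans (h i)⟩
  le_antisymm := by
    rintro ⟨n, x⟩ ⟨k, y⟩ ⟨hnk, h⟩ ⟨hkn, -⟩
    obtain rfl : n = k := hnk.antisymm hkn
    exact congrArg (Sigma.mk n) (funext fun i => (h i).symm)

/-- The vertex of level `n` given by a sequence of length `n`. -/
abbrev ofFn (x : ∀ i : Fin n, Fin (m i)) : Vertex m :=
  ⟨n, x⟩

theorem ofFn_injective : Function.Injective (ofFn (m := m) (n := n)) :=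
  sigma_mk_injective (β := fun k => ∀ i : Fin k, Fin (m i))

theorem isChild_iff : IsChild u v ↔ v.level = u.level + 1 ∧ u ≤ v :=
  Iff.rfl

theorem level_mono (huv : u ≤ v) : u.level ≤ v.level :=
  huv.1

theorem le_of_le_of_level_le (huw : u ≤ w) (hvw : v ≤ w) (h : u.level ≤ v.level) : u ≤ v :=
  ⟨h, fun i => (hvw.2 (Fin.castLE h i)).symm.trans (huw.2 i)⟩

theorem exists_le_level_eq (hn : n ≤ v.level) : ∃ u ≤ v, u.level = n :=
  ⟨ofFn fun i => v.2 (Fin.castLE hn i), ⟨hn, fun _ => rfl⟩, rfl⟩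

theorem exists_ge_level_eq (hm : ∀ k, 0 < m k) (hn : u.level ≤ n) : ∃ x, u ≤ x ∧ x.level = n :=
  ⟨ofFn fun i : Fin n => if hi : i < u.level then u.2 ⟨i, hi⟩ else ⟨0, hm i⟩,
    ⟨hn, fun i => dif_pos i.2⟩, rfl⟩

theorem exists_isChild (hv : v.level = n + 1) : ∃ u, IsChild u v ∧ u.level = n := by
  obtain ⟨u, huv, rfl⟩ := exists_le_level_eq (n.le_succ.trans_eq hv.symm)
  exact ⟨u, isChild_iff.2 ⟨hv, huv⟩, rfl⟩

end Vertex

section Layer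

variable (m : ℕ → ℕ) (n : ℕ)

theorem layer_eq_range : layer m n = Set.range (Vertex.ofFn (m := m) (n := n)) := by
  ext ⟨k, x⟩
  constructor
  · rintro rfl
    exact ⟨x, rfl⟩
  · rintro ⟨y, hy⟩
    exact (congrArg Sigma.fst hy).symm

theorem finite_layer : (layer m n).Finite := by
  rw [layer_eq_range]
  exact Set.finite_range _

theorem ncard_layer : (layer m n).ncard = ∏ i : Fin n, m i := by
  rw [layer_eq_range, Set.ncard_range_of_injective Vertex.ofFn_injective, Nat.card_pi]
  simp

end Layer

section TreeAction

variable {m : ℕ → ℕ} {G : Type*} [Group G] [MulAction G (Vertex m)]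

theorem rist_eq_rigidStabilizer (v : Vertex m) : rist G v = rigidStabilizer G {v} := by
  ext g
  simp only [rist, mem_rigidStabilizer, Subgroup.mem_iInf, Set.mem_singleton_iff, forall_eq]
  rfl

theorem ristLayer_eq_iSup (n : ℕ) :
    ristLayer m G n = ⨆ v : layer m n, rigidStabilizer G {v.1} := by
  simp only [ristLayer, ristSet, rist_eq_rigidStabilizer, iSup_subtype]

end TreeAction

namespace IsBranchGroup

variable {m : ℕ → ℕ} {G : Type*} [Group G] [MulAction G (Vertex m)]

theorem faithfulSMul (hG : IsBranchGroup m G) : FaithfulSMul G (Vertex m) where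
  eq_of_smul_eq_smul {g h} hgh := inv_mul_eq_one.1 <| hG.faithful _ fun v => by
    rw [mul_smul, ← hgh v, inv_smul_smul]

theorem level_smul (hG : IsBranchGroup m G) (g : G) (v : Vertex m) :
    (g • v).level = v.level := by
  induction hn : v.level generalizing v with
  | zero =>
    by_contra hne
    obtain ⟨n, hn'⟩ := Nat.exists_eq_succ_of_ne_zero hne
    obtain ⟨u, hu, -⟩ := Vertex.exists_isChild hn'
    have hchild := (hG.aut g⁻¹ u (g • v)).1 hu
    rw [inv_smul_smul, Vertex.isChild_iff, hn] at hchild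
    exact Nat.succ_ne_zero _ hchild.1.symm
  | succ n ih =>
    obtain ⟨u, hu, hun⟩ := Vertex.exists_isChild hn
    rw [(Vertex.isChild_iff.1 ((hG.aut g u v).1 hu)).1, ih u hun]

theorem smul_le_smul (hG : IsBranchGroup m G) (g : G) {u v : Vertex m} (huv : u ≤ v) :
    g • u ≤ g • v := by
  obtain ⟨k, hk⟩ := Nat.exists_eq_add_of_le (Vertex.level_mono huv)
  induction k generalizing v with
  | zero =>
    exact (huv.antisymm (Vertex.le_of_le_of_level_le le_rfl huv hk.le)) ▸ le_rfl
  | succ k ih =>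
    obtain ⟨w, hwv, hw⟩ := Vertex.exists_isChild hk
    have huw : u ≤ w := Vertex.le_of_le_of_level_le huv hwv.2 (hw ▸ Nat.le_add_right _ _)
    exact (ih huw hw).trans (Vertex.isChild_iff.1 ((hG.aut g w v).1 hwv)).2

theorem isForestAction (hG : IsBranchGroup m G) (hm : ∀ k, 0 < m k) :
    IsForestAction G (Vertex.level (m := m)) where
  level_smul := hG.level_smul
  smul_le_smul := hG.smul_le_smul
  eq_of_level_eq_of_le h hux hwx := (Vertex.le_of_le_of_level_le hux hwx h.le).antisymm
    (Vertex.le_of_le_of_level_le hwx hux h.ge)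
  exists_ge_level_eq := Vertex.exists_ge_level_eq hm

theorem orbit_eq_layer (hG : IsBranchGroup m G) (v : Vertex m) :
    MulAction.orbit G v = layer m v.level := by
  ext w
  constructor
  · rintro ⟨g, rfl⟩
    exact hG.level_smul g v
  · exact fun hw => hG.trans v w hw.symm

theorem infinite (hG : IsBranchGroup m G) (hm : ∀ k, 2 ≤ m k) : Infinite G := by
  rw [← not_finite_iff_infinite]
  intro _
  let v : Vertex m := .ofFn fun i : Fin (Nat.card G) => ⟨0, two_pos.trans_le (hm i)⟩
  have hlt : Nat.card G < (layer m v.level).ncard := calc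
    Nat.card G < 2 ^ Nat.card G := Nat.lt_two_pow_self
    _ = ∏ _i : Fin (Nat.card G), 2 := by simp
    _ ≤ ∏ i : Fin (Nat.card G), m i := Finset.prod_le_prod' fun i _ => hm i
    _ = (layer m v.level).ncard := (ncard_layer m _).symm
  rw [← hG.orbit_eq_layer v] at hlt
  exact hlt.not_ge (Finite.card_range_le fun g : G => g • v)

theorem inf_rigidStabilizer_ne_bot (hG : IsBranchGroup m G) (hm : ∀ k, 2 ≤ m k) (K : Subgroup G)
    [K.FiniteIndex] (v : Vertex m) : K ⊓ rigidStabilizer G {v} ≠ ⊥ := by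
  intro hbot
  have := hG.faithfulSMul
  have := hG.infinite hm
  have F := hG.isForestAction fun k => two_pos.trans_le (hm k)
  have hfin : Finite (rigidStabilizer G {v}) := finite_of_disjoint_finiteIndex (disjoint_iff.2 hbot)
  have hfin_layer (w : layer m v.level) : Finite (rigidStabilizer G {w.1}) := by
    obtain ⟨g, hg⟩ := hG.trans v w w.2.symm
    rw [← hg, ← Set.smul_set_singleton, F.rigidStabilizer_smul]
    exact Finite.of_equiv _ ((rigidStabilizer G {v}).equivMapOfInjective _
      (MulAut.conj g).injective).toEquiv
  have hcomm : Pairwise fun u w : layer m v.level => ∀ a b : G,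
      a ∈ rigidStabilizer G {u.1} → b ∈ rigidStabilizer G {w.1} → Commute a b :=
    fun u w huw a b => commute_of_mem_fixingSubgroup_compl <| F.disjoint_upperClosure
      (Set.singleton_subset_iff.2 u.2) (Set.singleton_subset_iff.2 w.2)
      (Set.disjoint_singleton.2 (Subtype.coe_ne_coe.2 huw))
  have := (finite_layer m v.level).to_subtype
  have hrist : Finite (ristLayer m G v.level) := by
    rw [ristLayer_eq_iSup]
    exact finite_iSup_of_pairwise_commute hfin_layer hcomm
  exact not_finite_iff_infinite.2 ‹Infinite G› <|
    (Subgroup.finite_iff_finite_and_finiteIndex _).2 ⟨hrist, hG.ristFiniteIndex v.level⟩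

end IsBranchGroup

section Product

variable {ι : Type*} {m : ι → ℕ → ℕ} {G : ι → Type*} [∀ j, Group (G j)]
  [∀ j, MulAction (G j) (Vertex (m j))]

theorem rigidStabilizer_subgroup_pi_ne_bot (hm : ∀ j k, 2 ≤ m j k)
    (hG : ∀ j, IsBranchGroup (m j) (G j)) (A : Subgroup (∀ j, G j)) [A.FiniteIndex]
    (x : Σ j, Vertex (m j)) : rigidStabilizer A {x} ≠ ⊥ := by
  classical
  obtain ⟨j, v⟩ := x
  let K : Subgroup (G j) := A.comap (MonoidHom.mulSingle G j)
  have : K.FiniteIndex := ⟨by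
    rw [Subgroup.index_comap]
    exact (Subgroup.instFiniteIndex_subgroupOf A _).index_ne_zero⟩
  obtain ⟨a, ha, ha_ne⟩ := (Subgroup.bot_or_exists_ne_one _).resolve_left
    ((hG j).inf_rigidStabilizer_ne_bot (hm j) K v)
  obtain ⟨haA, haR⟩ := Subgroup.mem_inf.1 ha
  intro hbot
  have hmem_pi : Pi.mulSingle j a ∈ rigidStabilizer (∀ j, G j) {(⟨j, v⟩ : Σ j, Vertex (m j))} :=
    mulSingle_mem_rigidStabilizer haR
  have hmem : (⟨Pi.mulSingle j a, haA⟩ : A) ∈ rigidStabilizer A {(⟨j, v⟩ : Σ j, Vertex (m j))} :=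
    mem_rigidStabilizer.2 (mem_rigidStabilizer.1 hmem_pi)
  rw [hbot, Subgroup.mem_bot] at hmem
  exact ha_ne (Pi.mulSingle_eq_one_iff.1 (congrArg Subtype.val hmem))

theorem finite_forestLayer [Finite ι] (m : ι → ℕ → ℕ) (n : ℕ) :
    ((fun x : Σ j, Vertex (m j) => x.2.level) ⁻¹' {n}).Finite :=
  Set.Finite.subset (Set.finite_iUnion fun j => (finite_layer (m j) n).image (Sigma.mk j))
    fun x hx => Set.mem_iUnion.2 ⟨x.1, x.2, hx, rfl⟩

theorem ncard_orbitsMeeting_forestLayer (hm : ∀ j k, 0 < m j k)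
    (hG : ∀ j, IsBranchGroup (m j) (G j)) (n : ℕ) :
    (orbitsMeeting (∀ j, G j) ((fun x : Σ j, Vertex (m j) => x.2.level) ⁻¹' {n})).ncard =
      Nat.card ι := by
  classical
  let base (j : ι) : Σ j, Vertex (m j) := ⟨j, .ofFn fun i : Fin n => ⟨0, hm j i⟩⟩
  have hinj : Function.Injective fun j => MulAction.orbit (∀ j, G j) (base j) := by
    intro i j hij
    obtain ⟨g, hg⟩ := MulAction.orbit_eq_iff.1 hij
    exact (congrArg Sigma.fst hg).symm
  rw [← Set.ncard_range_of_injective hinj]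
  congr 1
  ext O
  constructor
  · rintro ⟨⟨j, v⟩, hv, rfl⟩
    obtain ⟨a, ha⟩ := (hG j).trans v (base j).2 hv
    have hsmul : (Pi.mulSingle j a : ∀ j, G j) • (⟨j, v⟩ : Σ j, Vertex (m j)) = base j := by
      rw [pi_smul_sigma_mk, Pi.mulSingle_eq_same, ha]
    exact ⟨j, MulAction.orbit_eq_iff.2 ⟨_, hsmul⟩⟩
  · rintro ⟨j, rfl⟩
    exact ⟨base j, rfl, rfl⟩

theorem exists_isGreatest_disjointNormalFamilyCards_modEq [Finite ι] {p : ℕ} [Fact p.Prime]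
    (hm : ∀ j k, 2 ≤ m j k) (hG : ∀ j, IsBranchGroup (m j) (G j))
    (hp : ∀ j k, ActsAsPGroupOn p (G j) (layer (m j) k)) (A : Subgroup (∀ j, G j))
    [A.FiniteIndex] :
    ∃ r, IsGreatest (disjointNormalFamilyCards A) r ∧ r ≡ Nat.card ι [MOD p - 1] := by
  have hpos j k : 0 < m j k := two_pos.trans_le (hm j k)
  have := fun j => (hG j).faithfulSMul
  have F : IsForestAction (∀ j, G j) fun x : Σ j, Vertex (m j) => x.2.level :=
    .sigma fun j => (hG j).isForestAction (hpos j)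
  have FA := F.subgroup A
  have hfin := finite_forestLayer m
  have hpGroup n : ActsAsPGroupOn p (∀ j, G j) ((fun x : Σ j, Vertex (m j) => x.2.level) ⁻¹' {n}) :=
    .sigma fun j => hp j n
  obtain ⟨n, hn⟩ := FA.exists_isGreatest_ncard_orbitsMeeting (fun n => (hfin n).image _)
    ⟨A.index * Nat.card ι, by
      rintro _ ⟨n, rfl⟩
      rw [← ncard_orbitsMeeting_forestLayer hpos hG n]
      exact ncard_orbitsMeeting_subgroup_le A ((hfin n).image _)⟩
    (rigidStabilizer_subgroup_pi_ne_bot hm hG A)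
  refine ⟨_, hn, ?_⟩
  rw [← ncard_orbitsMeeting_forestLayer hpos hG n]
  exact (((hpGroup n).subgroup A).ncard_orbitsMeeting_modEq (hfin n)
    fun _ => FA.orbit_subset_layer).trans
    ((hpGroup n).ncard_orbitsMeeting_modEq (hfin n) fun _ => F.orbit_subset_layer).symm

end Product

theorem commensurable_products_mod_general {p : ℕ} (hp : p.Prime)
    {ι₁ ι₂ : Type*} [Finite ι₁] [Finite ι₂] {m₁ : ι₁ → ℕ → ℕ} {m₂ : ι₂ → ℕ → ℕ}
    {G₁ : ι₁ → Type*} [∀ j, Group (G₁ j)] [∀ j, MulAction (G₁ j) (Vertex (m₁ j))]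
    {G₂ : ι₂ → Type*} [∀ j, Group (G₂ j)] [∀ j, MulAction (G₂ j) (Vertex (m₂ j))]
    (hm₁ : ∀ j k, 2 ≤ m₁ j k) (hG₁ : ∀ j, IsBranchGroup (m₁ j) (G₁ j))
    (hp₁ : ∀ j k, ActsAsPGroupOn p (G₁ j) (layer (m₁ j) k))
    (hm₂ : ∀ j k, 2 ≤ m₂ j k) (hG₂ : ∀ j, IsBranchGroup (m₂ j) (G₂ j))
    (hp₂ : ∀ j k, ActsAsPGroupOn p (G₂ j) (layer (m₂ j) k))
    (hcomm : ∃ (A : Subgroup (∀ j, G₁ j)) (B : Subgroup (∀ j, G₂ j)),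
      A.FiniteIndex ∧ B.FiniteIndex ∧ Nonempty (A ≃* B)) :
    Nat.card ι₁ ≡ Nat.card ι₂ [MOD p - 1] := by
  have := Fact.mk hp
  obtain ⟨A, B, _, _, ⟨e⟩⟩ := hcomm
  obtain ⟨r, hr, hr_mod⟩ := exists_isGreatest_disjointNormalFamilyCards_modEq hm₁ hG₁ hp₁ A
  obtain ⟨s, hs, hs_mod⟩ := exists_isGreatest_disjointNormalFamilyCards_modEq hm₂ hG₂ hp₂ B
  rw [← disjointNormalFamilyCards_congr e] at hs
  obtain rfl : r = s := hr.unique hs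
  exact hr_mod.symm.trans hs_mod

/-- **Corollary.** Let `𝔇` be the family of branch groups on the `p`-ary tree which
act as a `p`-group on each layer.  If a direct product `Γ₁` of `n₁` groups in `𝔇` and a
direct product `Γ₂` of `n₂` groups in `𝔇` are abstractly commensurable (have isomorphic
subgroups of finite index), then `n₁ ≡ n₂ (mod p-1)`. -/
theorem commensurable_products_mod
    (p : ℕ) (hp : p.Prime) (n₁ n₂ : ℕ)
    (G₁ : Fin n₁ → Type u) [∀ j, Group (G₁ j)]
    [∀ j, MulAction (G₁ j) (Vertex (fun _ => p))]
    (hG₁ : ∀ j, IsBranchGroup (fun _ => p) (G₁ j))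
    (hp₁ : ∀ (j : Fin n₁) (k : ℕ) (g : G₁ j), ∃ e : ℕ,
      ∀ v : Vertex (fun _ => p), v.1 = k → (g ^ p ^ e) • v = v)
    (G₂ : Fin n₂ → Type v) [∀ j, Group (G₂ j)]
    [∀ j, MulAction (G₂ j) (Vertex (fun _ => p))]
    (hG₂ : ∀ j, IsBranchGroup (fun _ => p) (G₂ j))
    (hp₂ : ∀ (j : Fin n₂) (k : ℕ) (g : G₂ j), ∃ e : ℕ,
      ∀ v : Vertex (fun _ => p), v.1 = k → (g ^ p ^ e) • v = v)
    (hcomm : ∃ (A : Subgroup (∀ j, G₁ j)) (B : Subgroup (∀ j, G₂ j)),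
      A.FiniteIndex ∧ B.FiniteIndex ∧ Nonempty (↥A ≃* ↥B)) :
    n₁ ≡ n₂ [MOD p - 1] := by
  simpa using commensurable_products_mod_general hp (fun _ _ => hp.two_le) hG₁ hp₁
    (fun _ _ => hp.two_le) hG₂ hp₂ hcomm
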